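/- Let P be an n×n row-stochastic matrix, μ0 ∈ ℝ^n a probability vector, γ ∈ [0,1), d_μ ∈ ℝ^n a probability vector with strictly positive entries, D := diag(d_μ), and λ > 0. Set A := (I − γPᵀ)D, d_γ := (1−γ)(I − γPᵀ)^{-1}μ0, τ* := D^{-1}d_γ, and b_* := (1−γ)AᵀD^{-1}μ0 + λ d_μ. Then (AᵀD^{-1}A + λ d_μ d_μᵀ) τ* = b_*; consequently, in the tabular setting (X = I) with no ridge regularization (ξ = 0), the GradientDICE fixed point equals the true density ratio: w_{∞,0} = τ*. -/

import Mathlib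

open Matrix

/-- `1 - γ Pᵀ` is invertible for a row-stochastic `P` and `0 ≤ γ < 1`, by diagonal dominance. -/
lemma isUnit_det_one_sub_smul_transpose {ι : Type*} [Fintype ι] [DecidableEq ι]
    {P : Matrix ι ι ℝ} (hP_nonneg : ∀ i j, 0 ≤ P i j) (hP_row : ∀ i, ∑ j, P i j = 1)
    {γ : ℝ} (hγ0 : 0 ≤ γ) (hγ1 : γ < 1) :
    IsUnit ((1 : Matrix ι ι ℝ) - γ • Pᵀ).det := by
  refine isUnit_iff_ne_zero.mpr (det_ne_zero_of_sum_col_lt_diag fun k => ?_)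
  have hsum := Finset.add_sum_erase Finset.univ (P k) (Finset.mem_univ k)
  rw [hP_row k] at hsum
  have hoff : ∑ i ∈ Finset.univ.erase k, ‖((1 : Matrix ι ι ℝ) - γ • Pᵀ) i k‖
      = γ * ∑ i ∈ Finset.univ.erase k, P k i := by
    rw [Finset.mul_sum]
    refine Finset.sum_congr rfl fun i hi => ?_
    simp [Matrix.one_apply_ne (Finset.ne_of_mem_erase hi), abs_of_nonneg hγ0,
      abs_of_nonneg (hP_nonneg k i)]
  have hdiag : ((1 : Matrix ι ι ℝ) - γ • Pᵀ) k k = 1 - γ * P k k := by simp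
  rw [hoff, hdiag]
  refine lt_of_lt_of_le ?_ (le_abs_self _)
  linear_combination hγ1 + γ * hsum

/-- `1ᵀ (1 - γ Pᵀ) v = (1 - γ) 1ᵀ v` for a row-stochastic `P`. -/
lemma sum_one_sub_smul_transpose_mulVec {ι : Type*} [Fintype ι] [DecidableEq ι]
    {P : Matrix ι ι ℝ} (hP_row : ∀ i, ∑ j, P i j = 1) (γ : ℝ) (v : ι → ℝ) :
    ∑ i, (((1 : Matrix ι ι ℝ) - γ • Pᵀ) *ᵥ v) i = (1 - γ) * ∑ i, v i := by
  have hPv : ∑ i, (Pᵀ *ᵥ v) i = ∑ i, v i := by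
    simp only [mulVec, dotProduct, transpose_apply]
    rw [Finset.sum_comm]
    simp [← Finset.sum_mul, hP_row]
  simp only [sub_mulVec, one_mulVec, smul_mulVec, Pi.sub_apply, Pi.smul_apply, smul_eq_mul,
    Finset.sum_sub_distrib, ← Finset.mul_sum, hPv]
  ring

/-- In the tabular setting (`X = I`) with no ridge
regularization (`ξ = 0`), with `A := (I - γPᵀ)D`,
`d_γ := (1-γ)(I - γPᵀ)⁻¹μ0`, `τ* := D⁻¹d_γ`, and
`b_* := (1-γ)AᵀD⁻¹μ0 + λ d_μ`, the true density ratio `τ*` solves the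
GradientDICE KKT system: `(AᵀD⁻¹A + λ d_μ d_μᵀ) τ* = b_*`, i.e. the
GradientDICE fixed point `w_{∞,0}` equals `τ*`. -/
theorem stmt13 {n : ℕ} (hn : 1 ≤ n) (P : Matrix (Fin n) (Fin n) ℝ)
    (hP_nonneg : ∀ i j, 0 ≤ P i j) (hP_row : ∀ i, ∑ j, P i j = 1)
    (γ : ℝ) (hγ0 : 0 ≤ γ) (hγ1 : γ < 1)
    (μ0 : Fin n → ℝ) (hμ0_nonneg : ∀ i, 0 ≤ μ0 i) (hμ0_sum : ∑ i, μ0 i = 1)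
    (dμ : Fin n → ℝ) (hdμ_pos : ∀ i, 0 < dμ i) (hdμ_sum : ∑ i, dμ i = 1)
    (lam : ℝ) (hlam : 0 < lam)
    (A : Matrix (Fin n) (Fin n) ℝ)
    (hA : A = ((1 : Matrix (Fin n) (Fin n) ℝ) - γ • P.transpose)
        * Matrix.diagonal dμ)
    (τstar : Fin n → ℝ)
    (hτstar : τstar = fun i =>
      ((1 - γ) • (((1 : Matrix (Fin n) (Fin n) ℝ) - γ • P.transpose)⁻¹.mulVec μ0)) i
        / dμ i) :
    (A.transpose * (Matrix.diagonal dμ)⁻¹ * A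
        + lam • (Matrix.of fun i j => dμ i * dμ j)).mulVec τstar
      = (1 - γ) • (A.transpose * (Matrix.diagonal dμ)⁻¹).mulVec μ0 + lam • dμ := by
  set M := (1 : Matrix (Fin n) (Fin n) ℝ) - γ • P.transpose with hM
  have hMdet : IsUnit M.det := isUnit_det_one_sub_smul_transpose hP_nonneg hP_row hγ0 hγ1
  have hMinv : M *ᵥ (M⁻¹ *ᵥ μ0) = μ0 := by
    rw [mulVec_mulVec, mul_nonsing_inv M hMdet, one_mulVec]
  have hmass : (1 - γ) * ∑ i, (M⁻¹ *ᵥ μ0) i = 1 := by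
    rw [← sum_one_sub_smul_transpose_mulVec hP_row, ← hM, hMinv, hμ0_sum]
  have hcancel : ∀ i, dμ i * τstar i = (1 - γ) * (M⁻¹ *ᵥ μ0) i := fun i => by
    rw [hτstar]
    simp [mul_div_cancel₀ _ (hdμ_pos i).ne']
  have hDτ : diagonal dμ *ᵥ τstar = (1 - γ) • (M⁻¹ *ᵥ μ0) := by
    ext i
    simp [mulVec_diagonal, hcancel]
  have hAτ : A *ᵥ τstar = (1 - γ) • μ0 := by
    rw [hA, ← mulVec_mulVec, hDτ, mulVec_smul, hMinv]
  have hrank : (Matrix.of fun i j => dμ i * dμ j) *ᵥ τstar = dμ := by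
    ext i
    rw [mulVec, dotProduct]
    simp only [of_apply, mul_assoc, hcancel, ← Finset.mul_sum, hmass, mul_one]
  rw [add_mulVec, ← mulVec_mulVec, hAτ, mulVec_smul, smul_mulVec, hrank]
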